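/- Let (γ_n)_{n≥1} be any sequence of positive integers. Then there exists a C^∞ map f : [-1,1] → [-1,1] that is unimodal (has a unique critical point) such that all periodic points of f are hyperbolic and #Per(f, n) ≥ γ_n for every n ≥ 2, where Per(f, n) denotes the set of periodic points of f of least period n. In particular, the number of periodic points of f can grow faster than any prescribed sequence, so f fails the condition (Exp). -/

import Mathlib

/-- The set of periodic points of `f` of least period `n`. -/
def Per {X : Type*} (f : X → X) (n : ℕ) : Set X :=
  {x | f^[n] x = x ∧ ∀ m : ℕ, 1 ≤ m → m < n → f^[m] x ≠ x}

open Set Filter Topology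

section Multipliers

variable {f : ℝ → ℝ}

theorem deriv_iterate_add (hf : Differentiable ℝ f) (a b : ℕ) (x : ℝ) :
    deriv (f^[a + b]) x = deriv (f^[a]) (f^[b] x) * deriv (f^[b]) x := by
  rw [Function.iterate_add]
  exact deriv_comp x (hf.iterate a _) (hf.iterate b _)

theorem deriv_iterate_mul_of_fixed (hf : Differentiable ℝ f) {n : ℕ} {x : ℝ}
    (hx : f^[n] x = x) (k : ℕ) : deriv (f^[n * k]) x = deriv (f^[n]) x ^ k := by
  have hfix : ∀ k, f^[n * k] x = x := by
    intro k
    rw [Function.iterate_mul]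
    exact Function.iterate_fixed hx k
  induction k with
  | zero => simp
  | succ k ih =>
    rw [Nat.mul_succ, add_comm, deriv_iterate_add hf, hfix k, ih, pow_succ']

/-- Along a periodic orbit whose multiplier has absolute value one, the absolute values of the
derivatives of the iterates are periodic. -/
theorem abs_deriv_iterate_periodic (hf : Differentiable ℝ f) {n : ℕ} {x : ℝ}
    (hx : f^[n] x = x) (h1 : |deriv (f^[n]) x| = 1) (j k : ℕ) :
    |deriv (f^[j + n * k]) x| = |deriv (f^[j]) x| := by
  have hfix : f^[n * k] x = x := by
    rw [Function.iterate_mul]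
    exact Function.iterate_fixed hx k
  rw [deriv_iterate_add hf, hfix, deriv_iterate_mul_of_fixed hf hx, abs_mul, abs_pow, h1]
  simp

theorem deriv_iterate_ne_zero (hf : Differentiable ℝ f) {n : ℕ} (hn : 1 ≤ n) {x : ℝ}
    (hx : f^[n] x = x) (h1 : |deriv (f^[n]) x| = 1) (j : ℕ) : deriv (f^[j]) x ≠ 0 := by
  intro h0
  have h := abs_deriv_iterate_periodic hf hx h1 0 j
  have hj : 0 + n * j = (n * j - j) + j := by
    have : j ≤ n * j := Nat.le_mul_of_pos_left j hn
    omega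
  rw [hj, deriv_iterate_add hf, h0] at h
  simp at h

/-- A periodic orbit is hyperbolic as soon as some return of the orbit to one of its points has a
multiplier of absolute value different from one. -/
theorem abs_multiplier_ne_one_of_return (hf : Differentiable ℝ f) {n : ℕ} (hn : 1 ≤ n) {x : ℝ}
    (hx : f^[n] x = x) {j N : ℕ} (hN : f^[N] (f^[j] x) = f^[j] x)
    (hd : |deriv (f^[N]) (f^[j] x)| ≠ 1) : |deriv (f^[n]) x| ≠ 1 := by
  intro h1
  have h := abs_deriv_iterate_periodic hf hx h1 j N
  have hj : j + n * N = N * n + j := by ring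
  rw [hj, deriv_iterate_add hf, deriv_iterate_mul_of_fixed hf hN, abs_mul, abs_pow] at h
  have h0 : |deriv (f^[j]) x| ≠ 0 := abs_ne_zero.2 (deriv_iterate_ne_zero hf hn hx h1 j)
  have h2 : |deriv (f^[N]) (f^[j] x)| ^ n = 1 := by
    have := mul_right_cancel₀ h0 (h.trans (one_mul _).symm)
    exact this
  exact hd ((pow_eq_one_iff_of_nonneg (abs_nonneg _) (by omega)).1 h2)

/-- A periodic orbit is hyperbolic if every noncritical point of it is expanded by some iterate. -/
theorem abs_multiplier_ne_one_of_expanding (hf : Differentiable ℝ f) {n : ℕ} (hn : 1 ≤ n)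
    {x : ℝ} (hx : f^[n] x = x)
    (hexp : ∀ j, deriv f (f^[j] x) ≠ 0 → ∃ N, 1 < |deriv (f^[N]) (f^[j] x)|) :
    |deriv (f^[n]) x| ≠ 1 := by
  intro h1
  obtain ⟨j, -, hj⟩ := Finset.exists_max_image (Finset.range n) (fun j ↦ |deriv (f^[j]) x|)
    ⟨0, Finset.mem_range.2 hn⟩
  have hmax : ∀ i, |deriv (f^[i]) x| ≤ |deriv (f^[j]) x| := by
    intro i
    have h := abs_deriv_iterate_periodic hf hx h1 (i % n) (i / n)
    rw [Nat.mod_add_div] at h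
    rw [h]
    exact hj _ (Finset.mem_range.2 (Nat.mod_lt _ hn))
  have hne : deriv f (f^[j] x) ≠ 0 := by
    intro h0
    apply deriv_iterate_ne_zero hf hn hx h1 (1 + j)
    rw [deriv_iterate_add hf, Function.iterate_one, h0, zero_mul]
  obtain ⟨N, hN⟩ := hexp j hne
  have h := hmax (N + j)
  rw [deriv_iterate_add hf, abs_mul] at h
  have h0 : 0 < |deriv (f^[j]) x| := abs_pos.2 (deriv_iterate_ne_zero hf hn hx h1 j)
  nlinarith

end Multipliers

theorem StrictMonoOn.fixed_of_iterate_fixed {R : ℝ → ℝ} {s : Set ℝ} (hR : StrictMonoOn R s)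
    (hs : MapsTo R s s) {y : ℝ} (hy : y ∈ s) {n : ℕ} (hn : 1 ≤ n) (h : R^[n] y = y) :
    R y = y := by
  have hmem : ∀ k, R^[k] y ∈ s := fun k ↦ hs.iterate k hy
  obtain ⟨n, rfl⟩ : ∃ k, n = k + 1 := ⟨n - 1, by omega⟩
  rcases lt_trichotomy (R y) y with hlt | heq | hgt
  · have key : ∀ k, R^[k + 1] y < y := by
      intro k
      induction k with
      | zero => simpa using hlt
      | succ k ih =>
        rw [Function.iterate_succ_apply']
        exact (hR (hmem _) hy ih).trans hlt
    exact absurd h (key n).ne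
  · exact heq
  · have key : ∀ k, y < R^[k + 1] y := by
      intro k
      induction k with
      | zero => simpa using hgt
      | succ k ih =>
        rw [Function.iterate_succ_apply']
        exact hgt.trans (hR hy (hmem _) ih)
    exact absurd h (key n).ne'


/-- The unimodal map with critical point `0` which is `x ↦ 1 + 2 x` left of `-1/4`, has a flat
left shoulder, and is determined by the profile `G` on the right. -/
noncomputable def capMap (p : ℝ) (G : ℝ → ℝ) (x : ℝ) : ℝ :=
  1 + 2 * x * Real.smoothTransition (-4 * x) - (1 - p) / (1 + p) * G x

/-- The properties of the right profile `G` that govern the dynamics of `capMap p G`; the sets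
`I m` are invariant under the branch `x ↦ 2 ^ m * G x - 1` of the `(m + 2)`-nd iterate, and
all points of `(0, p)` outside of them are expanded by some iterate. -/
structure IsProfile (p : ℝ) (G : ℝ → ℝ) (I : ℕ → Set ℝ) : Prop where
  pos : 0 < p
  le : p ≤ 1 / 20
  contDiff : ContDiff ℝ (⊤ : ℕ∞) G
  eq_zero : ∀ x ≤ 0, G x = 0
  eq_affine : ∀ x, p ≤ x → G x = 1 + x + 4 * p / (1 - p) ^ 2 * (x - p)
  deriv_pos : ∀ x ∈ Ioo 0 p, 0 < deriv G x
  cover : ∀ x ∈ Ioo 0 p,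
    (∃ m : ℕ, 2 ^ m * G x ≤ 3 / 2 ∧ 1 < 2 ^ m * deriv G x) ∨ ∃ m, x ∈ I m
  subset : ∀ m, I m ⊆ Ioo 0 p
  bound : ∀ m, ∀ x ∈ I m, 2 ^ m * G x ≤ 3 / 2
  mapsTo : ∀ m, ∀ x ∈ I m, 2 ^ m * G x - 1 ∈ I m
  hyperbolic : ∀ m, ∀ x ∈ I m, 2 ^ m * G x - 1 = x → 2 ^ m * deriv G x ≠ 1

namespace IsProfile

variable {p : ℝ} {G : ℝ → ℝ} {I : ℕ → Set ℝ}

theorem capMap_of_nonneg {x : ℝ} (hx : 0 ≤ x) :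
    capMap p G x = 1 - (1 - p) / (1 + p) * G x := by
  rw [capMap, Real.smoothTransition.zero_of_nonpos (by linarith)]; ring

variable (h : IsProfile p G I)
include h

theorem contDiff_capMap : ContDiff ℝ (⊤ : ℕ∞) (capMap p G) := by
  unfold capMap
  have h1 : ContDiff ℝ (⊤ : ℕ∞) (fun x : ℝ ↦ Real.smoothTransition (-4 * x)) :=
    Real.smoothTransition.contDiff.comp (contDiff_const.mul contDiff_id)
  exact (contDiff_const.add ((contDiff_const.mul contDiff_id).mul h1)).sub
    (contDiff_const.mul h.contDiff)

theorem differentiable_capMap : Differentiable ℝ (capMap p G) :=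
  h.contDiff_capMap.differentiable (by simp)

theorem differentiable_profile : Differentiable ℝ G :=
  h.contDiff.differentiable (by simp)

theorem capMap_of_nonpos {x : ℝ} (hx : x ≤ 0) :
    capMap p G x = 1 + 2 * x * Real.smoothTransition (-4 * x) := by
  rw [capMap, h.eq_zero x hx]; ring

theorem capMap_of_ge {x : ℝ} (hx : p ≤ x) :
    capMap p G x = -1 + (1 + p) / (1 - p) * (1 - x) := by
  have hp := h.pos
  have hp1 := h.le
  have h1 : (1 - p) ≠ 0 := by linarith
  have h2 : (1 + p) ≠ 0 := by linarith
  rw [capMap_of_nonneg (by linarith), h.eq_affine x hx]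
  field_simp
  ring

theorem capMap_of_le {x : ℝ} (hx : x ≤ -1 / 4) : capMap p G x = 1 + 2 * x := by
  rw [h.capMap_of_nonpos (by linarith), Real.smoothTransition.one_of_one_le (by linarith)]; ring

theorem deriv_capMap_of_ge {x : ℝ} (hx : p ≤ x) :
    deriv (capMap p G) x = -((1 + p) / (1 - p)) := by
  have h1 : HasDerivWithinAt (capMap p G) (deriv (capMap p G) x) (Ici x) x :=
    (h.differentiable_capMap x).hasDerivAt.hasDerivWithinAt
  have h2 : HasDerivWithinAt (capMap p G) (-((1 + p) / (1 - p))) (Ici x) x := by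
    have h3 : HasDerivAt (fun y : ℝ ↦ -1 + (1 + p) / (1 - p) * (1 - y))
        (-((1 + p) / (1 - p))) x := by
      have := (((hasDerivAt_id x).const_sub 1).const_mul ((1 + p) / (1 - p))).const_add (-1)
      simpa using this
    exact h3.hasDerivWithinAt.congr (fun y hy ↦ h.capMap_of_ge (hx.trans hy)) (h.capMap_of_ge hx)
  exact (uniqueDiffWithinAt_Ici x).eq_deriv _ h1 h2

theorem deriv_capMap_of_le {x : ℝ} (hx : x ≤ -1 / 4) : deriv (capMap p G) x = 2 := by
  have h1 : HasDerivWithinAt (capMap p G) (deriv (capMap p G) x) (Iic x) x :=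
    (h.differentiable_capMap x).hasDerivAt.hasDerivWithinAt
  have h2 : HasDerivWithinAt (capMap p G) 2 (Iic x) x := by
    have h3 : HasDerivAt (fun y : ℝ ↦ 1 + 2 * y) 2 x := by
      simpa using ((hasDerivAt_id x).const_mul 2).const_add 1
    exact h3.hasDerivWithinAt.congr (fun y hy ↦ h.capMap_of_le (le_trans hy hx))
      (h.capMap_of_le hx)
  exact (uniqueDiffWithinAt_Iic x).eq_deriv _ h1 h2

theorem deriv_capMap_of_mem {x : ℝ} (hx : x ∈ Ioo 0 p) :
    deriv (capMap p G) x = -((1 - p) / (1 + p)) * deriv G x := by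
  have h3 : HasDerivAt (fun y ↦ 1 - (1 - p) / (1 + p) * G y)
      (-((1 - p) / (1 + p)) * deriv G x) x := by
    have := ((h.differentiable_profile x).hasDerivAt.const_mul ((1 - p) / (1 + p))).const_sub 1
    simpa using this
  refine (h3.congr_of_eventuallyEq ?_).deriv
  filter_upwards [Ioi_mem_nhds hx.1] with y hy
  exact capMap_of_nonneg (le_of_lt hy)

theorem le_deriv_capMap_of_neg {x : ℝ} (hx : x < 0) :
    2 * Real.smoothTransition (-4 * x) ≤ deriv (capMap p G) x := by
  have hs : HasDerivAt (fun y : ℝ ↦ Real.smoothTransition (-4 * y))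
      (deriv Real.smoothTransition (-4 * x) * (-4)) x := by
    have h0 : DifferentiableAt ℝ Real.smoothTransition (-4 * x) :=
      (Real.smoothTransition.contDiff (n := 1)).differentiable (by simp) _
    have h1 : HasDerivAt (fun y : ℝ ↦ -4 * y) (-4) x := by
      simpa using (hasDerivAt_id x).const_mul (-4)
    exact h0.hasDerivAt.comp x h1
  have h2 : HasDerivAt (fun y : ℝ ↦ 2 * y) 2 x := by
    simpa using (hasDerivAt_id x).const_mul 2
  have h3 := (h2.mul hs).const_add 1
  have h4 : deriv (capMap p G) x = 2 * Real.smoothTransition (-4 * x) +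
      2 * x * (deriv Real.smoothTransition (-4 * x) * (-4)) := by
    refine (h3.congr_of_eventuallyEq ?_).deriv
    filter_upwards [Iio_mem_nhds hx] with y hy
    exact h.capMap_of_nonpos (le_of_lt hy)
  rw [h4]
  have h5 : 0 ≤ deriv Real.smoothTransition (-4 * x) := Real.smoothTransition.monotone.deriv_nonneg
  nlinarith

theorem strictMonoOn_profile : StrictMonoOn G (Icc 0 p) := by
  apply strictMonoOn_of_deriv_pos (convex_Icc 0 p) h.contDiff.continuous.continuousOn
  intro x hx
  rw [interior_Icc] at hx
  exact h.deriv_pos x hx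

theorem profile_mem {x : ℝ} (hx : x ∈ Icc 0 p) : G x ∈ Icc 0 (1 + p) := by
  have h0 := h.strictMonoOn_profile.monotoneOn (left_mem_Icc.2 h.pos.le) hx hx.1
  have h1 := h.strictMonoOn_profile.monotoneOn hx (right_mem_Icc.2 h.pos.le) hx.2
  rw [h.eq_zero 0 le_rfl] at h0
  rw [h.eq_affine p le_rfl] at h1
  exact ⟨h0, by linarith⟩

theorem le_capMap {x : ℝ} (hx : x ∈ Icc (-1 / 4) p) : p ≤ capMap p G x := by
  have hp := h.pos
  have hp1 := h.le
  rcases le_total x 0 with h0 | h0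
  · rw [h.capMap_of_nonpos h0]
    have h1 := Real.smoothTransition.nonneg (-4 * x)
    have h2 := Real.smoothTransition.le_one (-4 * x)
    nlinarith [hx.1]
  · rw [capMap_of_nonneg h0]
    have h1 := (h.profile_mem ⟨h0, hx.2⟩).2
    have h2 : (1 - p) / (1 + p) * G x ≤ (1 - p) / (1 + p) * (1 + p) :=
      mul_le_mul_of_nonneg_left h1 (div_nonneg (by linarith) (by linarith))
    rw [div_mul_cancel₀ _ (by linarith)] at h2
    linarith

theorem capMap_le_one (x : ℝ) (hx : x ≤ p) : capMap p G x ≤ 1 := by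
  have hp := h.pos
  have hp1 := h.le
  rcases le_total x 0 with h0 | h0
  · rw [h.capMap_of_nonpos h0]
    have h1 := Real.smoothTransition.nonneg (-4 * x)
    nlinarith
  · rw [capMap_of_nonneg h0]
    have h1 := (h.profile_mem ⟨h0, hx⟩).1
    have h2 : 0 ≤ (1 - p) / (1 + p) * G x :=
      mul_nonneg (div_nonneg (by linarith) (by linarith)) h1
    linarith

theorem mapsTo_capMap : MapsTo (capMap p G) (Icc (-1) 1) (Icc (-1) 1) := by
  have hp := h.pos
  have hp1 := h.le
  intro x hx
  rcases le_total x p with hxp | hxp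
  · refine ⟨?_, h.capMap_le_one x hxp⟩
    rcases le_total x (-1 / 4) with h0 | h0
    · rw [h.capMap_of_le h0]; linarith [hx.1]
    · have := h.le_capMap ⟨h0, hxp⟩
      linarith
  · rw [h.capMap_of_ge hxp]
    have h1 : 0 ≤ (1 + p) / (1 - p) := div_nonneg (by linarith) (by linarith)
    have h2 : (1 + p) / (1 - p) ≤ 2 := by
      rw [div_le_iff₀ (by linarith)]; linarith
    constructor
    · nlinarith [hx.2]
    · nlinarith [hx.2]

theorem deriv_capMap_zero : deriv (capMap p G) 0 = 0 := by
  apply IsLocalMax.deriv_eq_zero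
  filter_upwards [Iio_mem_nhds h.pos] with y hy
  rw [h.capMap_of_nonpos le_rfl]
  simpa using h.capMap_le_one y (le_of_lt hy)

theorem eq_zero_of_deriv_capMap {x : ℝ} (hx : deriv (capMap p G) x = 0) : x = 0 := by
  have hp := h.pos
  have hp1 := h.le
  rcases lt_trichotomy x 0 with h0 | h0 | h0
  · have h1 := h.le_deriv_capMap_of_neg h0
    have h2 : 0 < Real.smoothTransition (-4 * x) := Real.smoothTransition.pos_of_pos (by linarith)
    linarith
  · exact h0
  · exfalso
    rcases lt_or_ge x p with h1 | h1
    · rw [h.deriv_capMap_of_mem ⟨h0, h1⟩] at hx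
      have h2 := h.deriv_pos x ⟨h0, h1⟩
      have h3 : 0 < (1 - p) / (1 + p) := div_pos (by linarith) (by linarith)
      nlinarith
    · rw [h.deriv_capMap_of_ge h1] at hx
      have h3 : 0 < (1 + p) / (1 - p) := div_pos (by linarith) (by linarith)
      linarith

theorem iterate_capMap {x : ℝ} (hx : x ∈ Icc (-1 / 4) p) (m : ℕ)
    (hE : 2 ^ m * ((1 + p) / (1 - p) * (1 - capMap p G x)) ≤ 3 / 2) :
    (capMap p G)^[m + 2] x = -1 + 2 ^ m * ((1 + p) / (1 - p) * (1 - capMap p G x)) ∧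
      deriv ((capMap p G)^[m + 2]) x
        = -(2 ^ m * ((1 + p) / (1 - p))) * deriv (capMap p G) x := by
  induction m with
  | zero =>
    constructor
    · simp only [zero_add, Function.iterate_succ, Function.iterate_zero, Function.comp, id]
      rw [h.capMap_of_ge (h.le_capMap hx)]; ring
    · rw [show 0 + 2 = 1 + 1 from rfl, deriv_iterate_add h.differentiable_capMap,
        Function.iterate_one, h.deriv_capMap_of_ge (h.le_capMap hx)]
      ring
  | succ m ih =>
    set E := (1 + p) / (1 - p) * (1 - capMap p G x) with hEdef
    rw [pow_succ] at hE
    obtain ⟨h1, h2⟩ := ih (by linarith)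
    have h3 : (capMap p G)^[m + 2] x ≤ -1 / 4 := by rw [h1]; linarith
    rw [show m + 1 + 2 = 1 + (m + 2) by ring]
    constructor
    · rw [Function.iterate_add_apply, Function.iterate_one, h.capMap_of_le h3, h1]
      ring
    · rw [deriv_iterate_add h.differentiable_capMap, h2, Function.iterate_one,
        h.deriv_capMap_of_le h3]
      ring

theorem iterate_capMap_of_mem {x : ℝ} (hx : x ∈ Ioo 0 p) (m : ℕ) (hE : 2 ^ m * G x ≤ 3 / 2) :
    (capMap p G)^[m + 2] x = 2 ^ m * G x - 1 ∧
      deriv ((capMap p G)^[m + 2]) x = 2 ^ m * deriv G x := by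
  have hp := h.pos
  have hp1 := h.le
  have e1 : (1 - p) ≠ 0 := by linarith
  have e2 : (1 + p) ≠ 0 := by linarith
  have hE' : (1 + p) / (1 - p) * (1 - capMap p G x) = G x := by
    rw [capMap_of_nonneg hx.1.le]; field_simp; ring
  have := h.iterate_capMap (x := x) ⟨by linarith [hx.1], hx.2.le⟩ m (by rw [hE']; exact hE)
  rw [hE', h.deriv_capMap_of_mem hx] at this
  refine ⟨this.1.trans (by ring), this.2.trans ?_⟩
  field_simp

theorem exists_expanding {x : ℝ} (hI : ∀ m, x ∉ I m)
    (hd : deriv (capMap p G) x ≠ 0) : ∃ N, 1 < |deriv ((capMap p G)^[N]) x| := by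
  have hp := h.pos
  have hp1 := h.le
  have hσ : 1 < (1 + p) / (1 - p) := by rw [lt_div_iff₀ (by linarith)]; linarith
  have hx0 : x ≠ 0 := by
    rintro rfl
    exact hd h.deriv_capMap_zero
  rcases le_or_gt x (-1 / 4) with h1 | h1
  · refine ⟨1, ?_⟩
    rw [Function.iterate_one, h.deriv_capMap_of_le h1]; norm_num
  rcases le_or_gt p x with h2 | h2
  · refine ⟨1, ?_⟩
    rw [Function.iterate_one, h.deriv_capMap_of_ge h2, abs_neg]
    exact hσ.trans_le (le_abs_self _)
  rcases hx0.lt_or_gt with h3 | h3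
  · set E := (1 + p) / (1 - p) * (1 - capMap p G x) with hE
    have hs0 : 0 < Real.smoothTransition (-4 * x) :=
      Real.smoothTransition.pos_of_pos (by linarith)
    have hs1 := Real.smoothTransition.le_one (-4 * x)
    have hf : 1 - capMap p G x = -2 * x * Real.smoothTransition (-4 * x) := by
      rw [h.capMap_of_nonpos h3.le]; ring
    have hf0 : 0 < 1 - capMap p G x := by rw [hf]; exact mul_pos (by linarith) hs0
    have hEpos : 0 < E := mul_pos (by linarith) hf0
    have hex : ∃ m : ℕ, 3 / 8 < 2 ^ m * E := by
      obtain ⟨m, hm⟩ := pow_unbounded_of_one_lt (3 / 8 / E) (one_lt_two)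
      exact ⟨m, by rwa [div_lt_iff₀ hEpos] at hm⟩
    classical
    have hm := Nat.find_spec hex
    have hle : 2 ^ Nat.find hex * E ≤ 3 / 2 := by
      rcases Nat.eq_zero_or_pos (Nat.find hex) with h0 | h0
      · rw [h0, pow_zero, one_mul, hE, hf]
        have : (1 + p) / (1 - p) ≤ 2 := by
          rw [div_le_iff₀ (by linarith)]; linarith
        have h5 : -2 * x * Real.smoothTransition (-4 * x) ≤ 1 / 2 := by nlinarith
        have h6 : 0 ≤ -2 * x * Real.smoothTransition (-4 * x) := by rw [← hf]; exact hf0.le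
        nlinarith
      · have h5 := Nat.find_min hex (m := Nat.find hex - 1) (by omega)
        have h6 : (2 : ℝ) ^ Nat.find hex = 2 ^ (Nat.find hex - 1) * 2 := by
          rw [← pow_succ]; congr 1; omega
        rw [h6]
        linarith
    refine ⟨Nat.find hex + 2, ?_⟩
    obtain ⟨-, h5⟩ := h.iterate_capMap ⟨h1.le, h2.le⟩ (Nat.find hex) hle
    rw [h5, neg_mul, abs_neg]
    refine lt_of_lt_of_le ?_ (le_abs_self _)
    have h6 := h.le_deriv_capMap_of_neg h3
    have h7 : 4 * (1 - capMap p G x) ≤ deriv (capMap p G) x := by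
      rw [hf]; nlinarith
    have h8 : (0 : ℝ) < 2 ^ Nat.find hex * ((1 + p) / (1 - p)) := by positivity
    have h9 : 2 ^ Nat.find hex * E
        = 2 ^ Nat.find hex * ((1 + p) / (1 - p)) * (1 - capMap p G x) := by
      simp only [hE]; ring
    nlinarith
  · rcases h.cover x ⟨h3, h2⟩ with ⟨m, h4, h5⟩ | ⟨m, hm⟩
    · refine ⟨m + 2, ?_⟩
      rw [(h.iterate_capMap_of_mem ⟨h3, h2⟩ m h4).2]
      exact h5.trans_le (le_abs_self _)
    · exact absurd hm (hI m)

theorem abs_multiplier_ne_one {x : ℝ} {n : ℕ}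
    (hn : 1 ≤ n) (hfix : (capMap p G)^[n] x = x) : |deriv ((capMap p G)^[n]) x| ≠ 1 := by
  by_cases hI : ∃ j m, (capMap p G)^[j] x ∈ I m
  · obtain ⟨j, m, hy⟩ := hI
    set y := (capMap p G)^[j] x with hydef
    have hym := h.subset m hy
    obtain ⟨-, e2⟩ := h.iterate_capMap_of_mem hym m (h.bound m y hy)
    have hR : ∀ z ∈ I m, (capMap p G)^[m + 2] z = 2 ^ m * G z - 1 := fun z hz ↦
      (h.iterate_capMap_of_mem (h.subset m hz) m (h.bound m z hz)).1
    have hmono : StrictMonoOn ((capMap p G)^[m + 2]) (I m) := by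
      intro a ha b hb hab
      rw [hR a ha, hR b hb]
      have := h.strictMonoOn_profile (Ioo_subset_Icc_self (h.subset m ha))
        (Ioo_subset_Icc_self (h.subset m hb)) hab
      have h2 : (0 : ℝ) < 2 ^ m := by positivity
      nlinarith
    have hmaps : MapsTo ((capMap p G)^[m + 2]) (I m) (I m) := by
      intro z hz
      rw [hR z hz]
      exact h.mapsTo m z hz
    have hyn : (capMap p G)^[n] y = y := by
      rw [hydef, ← Function.iterate_add_apply, add_comm, Function.iterate_add_apply, hfix]
    have hper : ((capMap p G)^[m + 2])^[n] y = y := by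
      rw [← Function.iterate_mul, mul_comm, Function.iterate_mul]
      exact Function.iterate_fixed hyn _
    have hy1 := hmono.fixed_of_iterate_fixed hmaps hy hn hper
    refine abs_multiplier_ne_one_of_return h.differentiable_capMap hn hfix hy1 ?_
    change |deriv ((capMap p G)^[m + 2]) y| ≠ 1
    have h0 : 0 < 2 ^ m * deriv G y := mul_pos (by positivity) (h.deriv_pos y hym)
    rw [e2, abs_of_pos h0]
    exact h.hyperbolic m y hy ((hR y hy).symm.trans hy1)
  · push Not at hI
    exact abs_multiplier_ne_one_of_expanding h.differentiable_capMap hn hfix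
      fun j hj ↦ h.exists_expanding (hI j) hj

theorem mem_Per {x : ℝ} {m : ℕ} (hx : x ∈ I m) (hfix : 2 ^ m * G x - 1 = x) :
    x ∈ Per (capMap p G) (m + 2) := by
  have hxm := h.subset m hx
  have hb := h.bound m x hx
  have hG := (h.profile_mem (Ioo_subset_Icc_self hxm)).1
  refine ⟨(h.iterate_capMap_of_mem hxm m hb).1.trans hfix, ?_⟩
  intro j hj1 hj2
  obtain rfl | ⟨i, rfl⟩ : j = 1 ∨ ∃ i, j = i + 2 := by
    rcases Nat.lt_or_ge j 2 with h2 | h2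
    · left; omega
    · right; exact ⟨j - 2, by omega⟩
  · rw [Function.iterate_one]
    have := h.le_capMap (x := x) ⟨by linarith [hxm.1], hxm.2.le⟩
    exact (hxm.2.trans_le this).ne'
  · have h2 : (2 : ℝ) ^ (i + 1) ≤ 2 ^ m := pow_le_pow_right₀ (by norm_num) (by omega)
    have h3 : 2 ^ (i + 1) * G x ≤ 3 / 2 := (mul_le_mul_of_nonneg_right h2 hG).trans hb
    rw [pow_succ] at h3
    have h5 : 0 ≤ 2 ^ i * G x := mul_nonneg (by positivity) hG
    rw [(h.iterate_capMap_of_mem hxm i (by linarith)).1]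
    have := hxm.1
    intro h4
    linarith

end IsProfile


section SmoothStep

theorem hasDerivAt_expNegInvGlue (x : ℝ) :
    HasDerivAt expNegInvGlue (x⁻¹ ^ 2 * expNegInvGlue x) x := by
  simpa using expNegInvGlue.hasDerivAt_polynomial_eval_inv_mul 1 x

theorem strictMonoOn_expNegInvGlue : StrictMonoOn expNegInvGlue (Ici 0) := by
  apply strictMonoOn_of_deriv_pos (convex_Ici 0)
    (expNegInvGlue.contDiff (n := 0)).continuous.continuousOn
  intro x hx
  rw [interior_Ici, mem_Ioi] at hx
  rw [(hasDerivAt_expNegInvGlue x).deriv]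
  have := expNegInvGlue.pos_of_pos hx
  positivity

theorem Real.smoothTransition.mul_one_sub_le_deriv (x : ℝ) :
    Real.smoothTransition x * (1 - Real.smoothTransition x) ≤ deriv Real.smoothTransition x := by
  have ha := hasDerivAt_expNegInvGlue x
  have hb : HasDerivAt (fun y ↦ expNegInvGlue (1 - y))
      (-((1 - x)⁻¹ ^ 2 * expNegInvGlue (1 - x))) x := by
    have := (hasDerivAt_expNegInvGlue (1 - x)).comp x ((hasDerivAt_id x).const_sub 1)
    simpa using! this
  have hpos := Real.smoothTransition.pos_denom x
  have hd := (ha.div (ha.add hb) hpos.ne').deriv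
  have hs : deriv Real.smoothTransition x = _ := hd
  rw [hs]
  have hsx : Real.smoothTransition x
      = expNegInvGlue x / (expNegInvGlue x + expNegInvGlue (1 - x)) := rfl
  rw [hsx]
  have hna := expNegInvGlue.nonneg x
  have hnb := expNegInvGlue.nonneg (1 - x)
  have key : expNegInvGlue x * expNegInvGlue (1 - x)
      ≤ expNegInvGlue x * expNegInvGlue (1 - x) * (x⁻¹ ^ 2 + (1 - x)⁻¹ ^ 2) := by
    rcases le_or_gt x 0 with h0 | h0
    · simp [expNegInvGlue.zero_of_nonpos h0]
    rcases le_or_gt 1 x with h1 | h1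
    · simp [expNegInvGlue.zero_of_nonpos (show 1 - x ≤ 0 by linarith)]
    have h2 : 1 ≤ x⁻¹ ^ 2 := one_le_pow₀ ((one_le_inv₀ h0).2 h1.le)
    have h3 : 0 ≤ (1 - x)⁻¹ ^ 2 := sq_nonneg _
    exact le_mul_of_one_le_right (mul_nonneg hna hnb) (by linarith)
  simp only [Pi.add_apply]
  set a := expNegInvGlue x
  set b := expNegInvGlue (1 - x)
  have e1 : a / (a + b) * (1 - a / (a + b)) = a * b / (a + b) ^ 2 := by
    field_simp
    ring
  rw [e1]
  apply div_le_div_of_nonneg_right _ (by positivity)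
  linarith

end SmoothStep

/-- A product of an odd number of functions, increasing at `x` and changing sign at distinct
points `z i`, has a positive derivative at `x` when `x` lies outside the range of the `z i`, and
only simple zeros. -/
theorem exists_hasDerivAt_prod_of_sign {k : ℕ} {φ : ℕ → ℝ → ℝ} {z : ℕ → ℝ} {x : ℝ}
    (hφ : ∀ i, ∃ d, 0 < d ∧ HasDerivAt (φ i) d x) (hz : StrictAnti z)
    (hneg : ∀ i, x < z i → φ i x < 0) (hpos : ∀ i, z i < x → 0 < φ i x)
    (hzero : ∀ i, x = z i → φ i x = 0) :
    ∃ d, HasDerivAt (fun y ↦ ∏ i ∈ Finset.range (2 * k + 1), φ i y) d x ∧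
      (x < z (2 * k) → 0 < d) ∧ (z 0 ≤ x → 0 < d) ∧
      (∏ i ∈ Finset.range (2 * k + 1), φ i x = 0 → d ≠ 0) := by
  choose d hd0 hd using hφ
  refine ⟨_, HasDerivAt.fun_finsetProd fun i _ ↦ hd i, ?_, ?_, ?_⟩
  · intro hx
    apply Finset.sum_pos _ ⟨0, by simp⟩
    intro i hi
    rw [smul_eq_mul]
    refine mul_pos ?_ (hd0 i)
    have hlt : ∀ j ∈ (Finset.range (2 * k + 1)).erase i, φ j x < 0 := by
      intro j hj
      apply hneg
      apply hx.trans_le (hz.antitone _)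
      have := Finset.mem_range.1 (Finset.mem_of_mem_erase hj)
      omega
    have hcard : ((Finset.range (2 * k + 1)).erase i).card = 2 * k := by
      rw [Finset.card_erase_of_mem hi, Finset.card_range]; rfl
    have h1 : ∏ j ∈ (Finset.range (2 * k + 1)).erase i, φ j x
        = ∏ j ∈ (Finset.range (2 * k + 1)).erase i, (-φ j x) := by
      rw [Finset.prod_neg, hcard, pow_mul]; simp
    rw [h1]
    exact Finset.prod_pos fun j hj ↦ neg_pos.2 (hlt j hj)
  · intro hx
    have h0 : ∀ j, 0 < j → 0 < φ j x := fun j hj ↦ hpos j ((hz hj).trans_le hx)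
    have h0' : ∀ j, 0 ≤ φ j x := by
      intro j
      rcases Nat.eq_zero_or_pos j with rfl | hj
      · rcases hx.lt_or_eq with h | h
        · exact (hpos 0 h).le
        · exact (hzero 0 h.symm).ge
      · exact (h0 j hj).le
    apply Finset.sum_pos'
    · intro i _
      rw [smul_eq_mul]
      exact mul_nonneg (Finset.prod_nonneg fun j _ ↦ h0' j) (hd0 i).le
    · refine ⟨0, by simp, ?_⟩
      rw [smul_eq_mul]
      refine mul_pos (Finset.prod_pos fun j hj ↦ h0 j ?_) (hd0 0)
      exact Nat.pos_of_ne_zero (Finset.ne_of_mem_erase hj)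
  · intro h
    obtain ⟨i, hi, hix⟩ := Finset.prod_eq_zero_iff.1 h
    have hne : ∀ j, j ≠ i → φ j x ≠ 0 := by
      have hxi : x = z i := by
        rcases lt_trichotomy x (z i) with h1 | h1 | h1
        · exact absurd hix (hneg i h1).ne
        · exact h1
        · exact absurd hix (hpos i h1).ne'
      intro j hj
      rcases lt_or_gt_of_ne hj with h1 | h1
      · exact (hneg j (hxi ▸ hz h1)).ne
      · exact (hpos j (hxi ▸ hz h1)).ne'
    rw [Finset.sum_eq_single i]
    · rw [smul_eq_mul]
      refine mul_ne_zero (Finset.prod_ne_zero_iff.2 fun j hj ↦ hne j ?_) (hd0 i).ne'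
      exact Finset.ne_of_mem_erase hj
    · intro j _ hj
      rw [Finset.prod_eq_zero (Finset.mem_erase.2 ⟨hj.symm, hi⟩) hix, zero_smul]
    · exact fun h ↦ absurd hi h

/-- The zeros of the `m`-th wiggle. -/
noncomputable def wiggleZero (k : ℕ → ℕ) (m i : ℕ) : ℝ :=
  (1 - i / ((2 * k m + 1) * (2 * m + 4))) / (m + 1)

/-- The factors of the `m`-th wiggle. -/
noncomputable def wiggleFactor (k : ℕ → ℕ) (m i : ℕ) (t : ℝ) : ℝ :=
  if i = 0 then t - wiggleZero k m 0
  else expNegInvGlue (1 - wiggleZero k m i) - expNegInvGlue (1 - t)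

/-- The `m`-th wiggle, a function with `2 * k m + 1` simple zeros. -/
noncomputable def wiggle (k : ℕ → ℕ) (m : ℕ) (t : ℝ) : ℝ :=
  ∏ i ∈ Finset.range (2 * k m + 1), wiggleFactor k m i t

section Wiggle

variable (k : ℕ → ℕ) (m : ℕ)

theorem wiggleZero_zero : wiggleZero k m 0 = 1 / (m + 1) := by simp [wiggleZero]

theorem strictAnti_wiggleZero : StrictAnti (wiggleZero k m) := by
  intro i j hij
  unfold wiggleZero
  have h : (i : ℝ) < j := by exact_mod_cast hij
  gcongr

theorem wiggleZero_le_one (i : ℕ) : wiggleZero k m i ≤ 1 := by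
  refine ((strictAnti_wiggleZero k m).antitone (Nat.zero_le i)).trans ?_
  rw [wiggleZero_zero, div_le_one (by positivity)]
  linarith [(Nat.cast_nonneg m : (0 : ℝ) ≤ m)]

theorem lt_wiggleZero {i : ℕ} (hi : i ≤ 2 * k m) :
    ((2 * m + 3) / (2 * (m + 1) * (m + 2)) : ℝ) < wiggleZero k m i := by
  have h : (i : ℝ) < 2 * k m + 1 := by exact_mod_cast Nat.lt_succ_of_le hi
  have h1 : (i : ℝ) / ((2 * k m + 1) * (2 * m + 4)) < 1 / (2 * m + 4) := by
    rw [div_lt_div_iff₀ (by positivity) (by positivity)]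
    have : (0 : ℝ) < 2 * m + 4 := by positivity
    nlinarith
  unfold wiggleZero
  rw [lt_div_iff₀ (by positivity)]
  have h2 : ((2 * m + 3) / (2 * (m + 1) * (m + 2)) * (m + 1) : ℝ) = 1 - 1 / (2 * m + 4) := by
    field_simp
    ring
  rw [h2]
  linarith

theorem contDiff_wiggle : ContDiff ℝ (⊤ : ℕ∞) (wiggle k m) := by
  unfold wiggle
  apply contDiff_prod
  intro i _
  unfold wiggleFactor
  split_ifs
  · exact contDiff_id.sub contDiff_const
  · exact contDiff_const.sub (expNegInvGlue.contDiff.comp (contDiff_const.sub contDiff_id))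

theorem wiggle_wiggleZero {i : ℕ} (hi : i ≤ 2 * k m) : wiggle k m (wiggleZero k m i) = 0 := by
  apply Finset.prod_eq_zero (Finset.mem_range.2 (Nat.lt_succ_of_le hi))
  unfold wiggleFactor
  split_ifs with h
  · rw [h, sub_self]
  · exact sub_self _

theorem wiggle_of_one_le {t : ℝ} (ht : 1 ≤ t) :
    wiggle k m t = (t - wiggleZero k m 0) *
      ∏ i ∈ Finset.range (2 * k m), expNegInvGlue (1 - wiggleZero k m (i + 1)) := by
  rw [wiggle, Finset.prod_range_succ', mul_comm]
  simp [wiggleFactor, expNegInvGlue.zero_of_nonpos (show 1 - t ≤ 0 by linarith)]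

theorem prod_expNegInvGlue_pos : 0 < ∏ i ∈ Finset.range (2 * k m),
    expNegInvGlue (1 - wiggleZero k m (i + 1)) := by
  apply Finset.prod_pos
  intro i _
  apply expNegInvGlue.pos_of_pos
  have := (strictAnti_wiggleZero k m (Nat.succ_pos i)).trans_le (wiggleZero_le_one k m 0)
  linarith

theorem deriv_wiggle {t : ℝ} (ht : t < 1) :
    (t < wiggleZero k m (2 * k m) → 0 < deriv (wiggle k m) t) ∧
    (1 / (m + 1) ≤ t → 0 < deriv (wiggle k m) t) ∧
    (wiggle k m t = 0 → deriv (wiggle k m) t ≠ 0) := by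
  have hlt : ∀ i, t < wiggleZero k m i →
      expNegInvGlue (1 - wiggleZero k m i) < expNegInvGlue (1 - t) := by
    intro i hi
    apply strictMonoOn_expNegInvGlue
    · rw [mem_Ici]; linarith [wiggleZero_le_one k m i]
    · rw [mem_Ici]; linarith
    · linarith
  have hgt : ∀ i, wiggleZero k m i < t →
      expNegInvGlue (1 - t) < expNegInvGlue (1 - wiggleZero k m i) := by
    intro i hi
    apply strictMonoOn_expNegInvGlue
    · rw [mem_Ici]; linarith
    · rw [mem_Ici]; linarith [wiggleZero_le_one k m i]
    · linarith
  obtain ⟨d, hd, h1, h2, h3⟩ := exists_hasDerivAt_prod_of_sign (k := k m)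
    (φ := wiggleFactor k m) (z := wiggleZero k m) (x := t) (by
      intro i
      by_cases hi : i = 0
      · refine ⟨1, one_pos, ?_⟩
        have h5 : wiggleFactor k m i = fun t ↦ t - wiggleZero k m 0 := by
          funext s; simp [wiggleFactor, hi]
        rw [h5]
        exact (hasDerivAt_id t).sub_const (wiggleZero k m 0)
      · refine ⟨(1 - t)⁻¹ ^ 2 * expNegInvGlue (1 - t), ?_, ?_⟩
        · have h0 : 0 < 1 - t := by linarith
          have := expNegInvGlue.pos_of_pos h0
          positivity
        · have := ((hasDerivAt_expNegInvGlue (1 - t)).comp t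
            ((hasDerivAt_id t).const_sub 1)).const_sub (expNegInvGlue (1 - wiggleZero k m i))
          have h5 : wiggleFactor k m i = fun t ↦
              expNegInvGlue (1 - wiggleZero k m i) - expNegInvGlue (1 - t) := by
            funext s; simp [wiggleFactor, hi]
          rw [h5]
          simpa using! this)
    (strictAnti_wiggleZero k m)
    (by
      intro i hi
      unfold wiggleFactor
      split_ifs with h0
      · rw [h0] at hi; linarith
      · linarith [hlt i hi])
    (by
      intro i hi
      unfold wiggleFactor
      split_ifs with h0
      · rw [h0] at hi; linarith
      · linarith [hgt i hi])
    (by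
      rintro i rfl
      unfold wiggleFactor
      split_ifs with h0
      · rw [h0, sub_self]
      · exact sub_self _)
  have hd' : deriv (wiggle k m) t = d := hd.deriv
  rw [hd']
  refine ⟨h1, ?_, h3⟩
  rw [wiggleZero_zero] at h2
  exact h2

end Wiggle


/-- A smooth step rising from `0` at `1 / (m + 1)` to `1` at the midpoint of
`1 / (m + 1)` and `1 / m`. -/
noncomputable def stairStep (m : ℕ) (t : ℝ) : ℝ :=
  Real.smoothTransition (2 * m * (m + 1) * t - 2 * m)

/-- The smooth weight of the `m`-th stair. -/
noncomputable def stairWeight (m : ℕ) (t : ℝ) : ℝ := stairStep (m + 1) t - stairStep m t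

/-- The smooth staircase with height `2⁻ᵐ` on the `m`-th stair. -/
noncomputable def staircase (t : ℝ) : ℝ := ∑' m : ℕ, (1 / 2) ^ m * stairWeight m t

/-- The sum of the wiggles with amplitudes `A m`, localized to the stairs. -/
noncomputable def wiggleSum (k : ℕ → ℕ) (A : ℕ → ℝ) (t : ℝ) : ℝ :=
  ∑' m : ℕ, A m * ((1 / 2) ^ m * (stairWeight m t * wiggle k m t))

/-- The right profile, in the coordinate `t = x / p`. -/
noncomputable def stairProfile (k : ℕ → ℕ) (A : ℕ → ℝ) (p t : ℝ) : ℝ :=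
  (1 + p * t) * staircase t + wiggleSum k A t

section Stair

theorem stairStep_nonneg (m : ℕ) (t : ℝ) : 0 ≤ stairStep m t := Real.smoothTransition.nonneg _

theorem stairStep_le_one (m : ℕ) (t : ℝ) : stairStep m t ≤ 1 := Real.smoothTransition.le_one _

theorem stairStep_eq_zero {m : ℕ} {t : ℝ} (h : m = 0 ∨ t ≤ 1 / (m + 1)) : stairStep m t = 0 := by
  apply Real.smoothTransition.zero_of_nonpos
  rcases h with rfl | h
  · simp
  · rw [le_div_iff₀ (by positivity)] at h
    have : (0 : ℝ) ≤ m := m.cast_nonneg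
    nlinarith

theorem stairStep_eq_one {m n : ℕ} (hn : 0 < n) (hmn : n ≤ m) {t : ℝ}
    (h : ((2 * n + 1) / (2 * n * (n + 1)) : ℝ) ≤ t) : stairStep m t = 1 := by
  apply Real.smoothTransition.one_of_one_le
  have h0 : (0 : ℝ) < n := by exact_mod_cast hn
  have h1 : (n : ℝ) ≤ m := by exact_mod_cast hmn
  have h2 : ((2 * m + 1) / (2 * m * (m + 1)) : ℝ) ≤ (2 * n + 1) / (2 * n * (n + 1)) := by
    have h3 : (0 : ℝ) < m := by linarith
    rw [div_le_div_iff₀ (by positivity) (by positivity)]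
    have : (0 : ℝ) ≤ (m - n) * (2 * m * n + m + n + 1) :=
      mul_nonneg (by linarith) (by positivity)
    nlinarith
  have h3 : (0 : ℝ) < m := by linarith
  have h4 := h2.trans h
  rw [div_le_iff₀ (by positivity)] at h4
  nlinarith

theorem contDiff_stairStep (m : ℕ) : ContDiff ℝ (⊤ : ℕ∞) (stairStep m) := by
  unfold stairStep
  exact Real.smoothTransition.contDiff.comp ((contDiff_const.mul contDiff_id).sub contDiff_const)

theorem contDiff_stairWeight (m : ℕ) : ContDiff ℝ (⊤ : ℕ∞) (stairWeight m) :=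
  (contDiff_stairStep (m + 1)).sub (contDiff_stairStep m)

theorem stairWeight_of_nonpos (m : ℕ) {t : ℝ} (ht : t ≤ 0) : stairWeight m t = 0 := by
  unfold stairWeight
  rw [stairStep_eq_zero (Or.inr (ht.trans (by positivity))),
    stairStep_eq_zero (Or.inr (ht.trans (by positivity))), sub_zero]

theorem stairWeight_of_one_le {m : ℕ} (hm : 0 < m) {t : ℝ} (ht : 1 ≤ t) : stairWeight m t = 0 := by
  unfold stairWeight
  have h : ((2 * (1 : ℕ) + 1) / (2 * (1 : ℕ) * ((1 : ℕ) + 1)) : ℝ) ≤ t := by norm_num; linarith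
  rw [stairStep_eq_one one_pos (by omega) h, stairStep_eq_one one_pos (by omega) h, sub_self]

theorem le_deriv_stairStep (m : ℕ) (t : ℝ) :
    stairStep (m + 1) t * (1 - stairStep (m + 1) t) ≤ deriv (stairStep (m + 1)) t := by
  have h0 : DifferentiableAt ℝ Real.smoothTransition
      (2 * (m + 1 : ℕ) * ((m + 1 : ℕ) + 1) * t - 2 * (m + 1 : ℕ)) :=
    (Real.smoothTransition.contDiff (n := 1)).differentiable (by simp) _
  have h1 : HasDerivAt (fun y : ℝ ↦ 2 * (m + 1 : ℕ) * ((m + 1 : ℕ) + 1) * y - 2 * (m + 1 : ℕ))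
      (2 * (m + 1 : ℕ) * ((m + 1 : ℕ) + 1)) t := by
    simpa using ((hasDerivAt_id t).const_mul
      (2 * (m + 1 : ℕ) * ((m + 1 : ℕ) + 1) : ℝ)).sub_const (2 * (m + 1 : ℕ) : ℝ)
  have h2 : deriv (stairStep (m + 1)) t = _ := (h0.hasDerivAt.comp t h1).deriv
  rw [h2]
  have h3 := Real.smoothTransition.mul_one_sub_le_deriv
    (2 * (m + 1 : ℕ) * ((m + 1 : ℕ) + 1) * t - 2 * (m + 1 : ℕ))
  have h4 := stairStep_nonneg (m + 1) t
  have h5 := stairStep_le_one (m + 1) t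
  have h6 : (1 : ℝ) ≤ 2 * (m + 1 : ℕ) * ((m + 1 : ℕ) + 1) := by
    push_cast
    have : (0 : ℝ) ≤ m := m.cast_nonneg
    nlinarith
  exact h3.trans (le_mul_of_one_le_right
    ((mul_nonneg h4 (sub_nonneg.2 h5)).trans h3) h6)

/-- On the `m`-th stair and the riser below it only two weights contribute. -/
theorem stairWeight_of_mem {m : ℕ} {t : ℝ}
    (h1 : ((2 * (m + 2 : ℕ) + 1) / (2 * (m + 2 : ℕ) * ((m + 2 : ℕ) + 1)) : ℝ) ≤ t)
    (h2 : m = 0 ∨ t ≤ 1 / (m + 1)) :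
    stairWeight m t = stairStep (m + 1) t ∧ stairWeight (m + 1) t = 1 - stairStep (m + 1) t ∧
      ∀ i ∉ ({m, m + 1} : Finset ℕ), stairWeight i t = 0 := by
  have hone : ∀ i, m + 2 ≤ i → stairStep i t = 1 := fun i hi ↦
    stairStep_eq_one (by omega) hi h1
  have hzero : ∀ i, i ≤ m → stairStep i t = 0 := by
    intro i hi
    apply stairStep_eq_zero
    rcases h2 with h2 | h2
    · left; omega
    · right
      refine h2.trans ?_
      have : (i : ℝ) ≤ m := by exact_mod_cast hi
      exact one_div_le_one_div_of_le (by positivity) (by linarith)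
  refine ⟨?_, ?_, ?_⟩
  · rw [stairWeight, hzero m le_rfl, sub_zero]
  · rw [stairWeight, hone (m + 1 + 1) le_rfl]
  · intro i hi
    simp only [Finset.mem_insert, Finset.mem_singleton, not_or] at hi
    unfold stairWeight
    rcases Nat.lt_or_ge i m with h | h
    · rw [hzero i h.le, hzero (i + 1) h, sub_self]
    · rw [hone i (by omega), hone (i + 1) (by omega), sub_self]

end Stair

section Profile

variable {k : ℕ → ℕ} {A : ℕ → ℝ} {p : ℝ}

theorem stairProfile_of_nonpos {t : ℝ} (ht : t ≤ 0) : stairProfile k A p t = 0 := by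
  simp [stairProfile, staircase, wiggleSum, stairWeight_of_nonpos _ ht]

/-- Interpolation between two consecutive stairs. -/
theorem stairProfile_of_mem {m : ℕ} {t : ℝ}
    (h1 : ((2 * (m + 2 : ℕ) + 1) / (2 * (m + 2 : ℕ) * ((m + 2 : ℕ) + 1)) : ℝ) ≤ t)
    (h2 : m = 0 ∨ t ≤ 1 / (m + 1)) :
    stairProfile k A p t = (1 / 2) ^ m * (stairStep (m + 1) t * (1 + p * t + A m * wiggle k m t) +
      (1 - stairStep (m + 1) t) * (1 + p * t + A (m + 1) * wiggle k (m + 1) t) / 2) := by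
  obtain ⟨e1, e2, e3⟩ := stairWeight_of_mem h1 h2
  have hS : staircase t = ∑ i ∈ ({m, m + 1} : Finset ℕ), (1 / 2) ^ i * stairWeight i t :=
    tsum_eq_sum fun i hi ↦ by rw [e3 i hi, mul_zero]
  have hW : wiggleSum k A t = ∑ i ∈ ({m, m + 1} : Finset ℕ),
      A i * ((1 / 2) ^ i * (stairWeight i t * wiggle k i t)) :=
    tsum_eq_sum fun i hi ↦ by rw [e3 i hi]; ring
  rw [Finset.sum_pair (by omega), e1, e2] at hS hW
  rw [stairProfile, hS, hW]
  ring

theorem stairProfile_of_one_le {t : ℝ} (ht : 1 ≤ t) :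
    stairProfile k A p t = 1 + p * t + A 0 * wiggle k 0 t := by
  have h : stairStep (0 + 1) t = 1 := by
    refine stairStep_eq_one (n := 1) one_pos le_rfl ?_
    norm_num
    linarith
  rw [stairProfile_of_mem (m := 0) (by norm_num; linarith) (Or.inl rfl), h]
  ring

theorem riser_lt (m : ℕ) :
    ((2 * (m + 2 : ℕ) + 1) / (2 * (m + 2 : ℕ) * ((m + 2 : ℕ) + 1)) : ℝ) < 1 / (m + 2) := by
  push_cast
  rw [div_lt_div_iff₀ (by positivity) (by positivity)]
  have : (0 : ℝ) ≤ m := m.cast_nonneg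
  nlinarith

theorem exists_mem_stair {t : ℝ} (ht : t ∈ Ioo 0 1) :
    ∃ m : ℕ, 1 / ((m : ℝ) + 2) ≤ t ∧ t < 1 / (m + 1) := by
  have hinv : 1 < t⁻¹ := (one_lt_inv₀ ht.1).2 ht.2
  have hceil : 2 ≤ ⌈t⁻¹⌉₊ := Nat.lt_ceil.2 (by simpa using hinv)
  refine ⟨⌈t⁻¹⌉₊ - 2, ?_, ?_⟩
  · have h1 := Nat.le_ceil t⁻¹
    have h2 : ((⌈t⁻¹⌉₊ - 2 : ℕ) : ℝ) + 2 = ⌈t⁻¹⌉₊ := by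
      rw [Nat.cast_sub hceil]; push_cast; ring
    rw [h2, one_div]
    exact inv_le_of_inv_le₀ ht.1 h1
  · have h1 := Nat.ceil_lt_add_one (inv_nonneg.2 ht.1.le)
    have h2 : ((⌈t⁻¹⌉₊ - 2 : ℕ) : ℝ) + 1 = ⌈t⁻¹⌉₊ - 1 := by
      rw [Nat.cast_sub hceil]; push_cast; ring
    rw [h2, one_div]
    refine (lt_inv_comm₀ ?_ ht.1).1 (by linarith)
    have : (2 : ℝ) ≤ ⌈t⁻¹⌉₊ := by exact_mod_cast hceil
    linarith

theorem hasDerivAt_stairProfile {m : ℕ} {t : ℝ} (h1 : 1 / ((m : ℝ) + 2) ≤ t)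
    (h2 : t < 1 / (m + 1)) :
    HasDerivAt (stairProfile k A p) ((1 / 2) ^ m *
      (deriv (stairStep (m + 1)) t * ((1 + p * t) / 2 + A m * wiggle k m t
          - A (m + 1) * wiggle k (m + 1) t / 2)
        + stairStep (m + 1) t * (p + A m * deriv (wiggle k m) t)
        + (1 - stairStep (m + 1) t) * (p + A (m + 1) * deriv (wiggle k (m + 1)) t) / 2)) t := by
  have hs : HasDerivAt (stairStep (m + 1)) (deriv (stairStep (m + 1)) t) t :=
    ((contDiff_stairStep (m + 1)).differentiable (by simp) t).hasDerivAt
  have hw : ∀ i, HasDerivAt (fun s ↦ 1 + p * s + A i * wiggle k i s)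
      (p + A i * deriv (wiggle k i) t) t := by
    intro i
    have h3 : HasDerivAt (wiggle k i) (deriv (wiggle k i) t) t :=
      ((contDiff_wiggle k i).differentiable (by simp) t).hasDerivAt
    have h4 : HasDerivAt (fun s ↦ 1 + p * s) p t := by
      simpa using ((hasDerivAt_id t).const_mul p).const_add 1
    exact h4.add (h3.const_mul (A i))
  have h5 := ((hs.mul (hw m)).add (((hs.const_sub 1).mul (hw (m + 1))).div_const 2)).const_mul
    ((1 / 2 : ℝ) ^ m)
  refine HasDerivAt.congr_of_eventuallyEq (f := fun t ↦ (1 / 2) ^ m *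
    (stairStep (m + 1) t * (1 + p * t + A m * wiggle k m t) +
      (1 - stairStep (m + 1) t) * (1 + p * t + A (m + 1) * wiggle k (m + 1) t) / 2)) ?_ ?_
  · convert! h5 using 1
    ring
  · filter_upwards [Ioo_mem_nhds ((riser_lt m).trans_le h1) h2] with s hs
    exact stairProfile_of_mem hs.1.le (Or.inr hs.2.le)

end Profile


/-- Amplitudes `A` and a position `p` for which `stairProfile k A p` is the profile of a map all of
whose periodic points are hyperbolic. -/
structure IsAdmissible (k : ℕ → ℕ) (A : ℕ → ℝ) (p : ℝ) : Prop where
  pos : 0 < p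
  le : p ≤ 1 / 20
  amp_pos : ∀ m, 0 < A m
  amp_zero : A 0 * ∏ i ∈ Finset.range (2 * k 0), expNegInvGlue (1 - wiggleZero k 0 (i + 1))
    = 4 * p / (1 - p) ^ 2 * p
  abs_wiggle_le : ∀ m, ∀ t ∈ Icc (0 : ℝ) 1, |A m * wiggle k m t| ≤ 1 / 16
  abs_deriv_wiggle_le : ∀ m, ∀ t ∈ Icc (0 : ℝ) 1, |A m * deriv (wiggle k m) t| ≤ p / 2
  contDiff : ContDiff ℝ (⊤ : ℕ∞) (stairProfile k A p)

/-- The invariant intervals of the map with profile `stairProfile k A p`. -/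
def wiggleInterval (k : ℕ → ℕ) (p : ℝ) (m : ℕ) : Set ℝ :=
  {x | x / p ∈ Ico (wiggleZero k m (2 * k m)) (1 / ((m : ℝ) + 1))}

namespace IsAdmissible

variable {k : ℕ → ℕ} {A : ℕ → ℝ} {p : ℝ} (h : IsAdmissible k A p)

omit h in
theorem stair_bounds {m : ℕ} {t : ℝ}
    (ht : t ∈ Ico (wiggleZero k m (2 * k m)) (1 / ((m : ℝ) + 1))) :
    1 / ((m : ℝ) + 2) ≤ t ∧ t < 1 / (m + 1) ∧
      ((2 * (m + 1 : ℕ) + 1) / (2 * (m + 1 : ℕ) * ((m + 1 : ℕ) + 1)) : ℝ) < t := by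
  have h1 := (lt_wiggleZero k m le_rfl).trans_le ht.1
  refine ⟨le_trans ?_ h1.le, ht.2, ?_⟩
  · rw [div_le_div_iff₀ (by positivity) (by positivity)]
    have : (0 : ℝ) ≤ m := m.cast_nonneg
    nlinarith
  · refine lt_of_eq_of_lt ?_ h1
    push_cast
    congr 1 <;> ring

omit h in
theorem mem_Ioo_of_stair {m : ℕ} {t : ℝ} (h1 : 1 / ((m : ℝ) + 2) ≤ t) (h2 : t < 1 / (m + 1)) :
    t ∈ Ioo (0 : ℝ) 1 := by
  refine ⟨lt_of_lt_of_le (by positivity) h1, h2.trans_le ?_⟩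
  rw [div_le_one (by positivity)]
  linarith [(m.cast_nonneg : (0 : ℝ) ≤ m)]

omit h in
theorem stairProfile_on_interval {m : ℕ} {t : ℝ}
    (ht : t ∈ Ico (wiggleZero k m (2 * k m)) (1 / ((m : ℝ) + 1))) :
    2 ^ m * stairProfile k A p t = 1 + p * t + A m * wiggle k m t ∧
      2 ^ m * deriv (stairProfile k A p) t = p + A m * deriv (wiggle k m) t := by
  obtain ⟨h1, h2, h3⟩ := stair_bounds ht
  have hχ : ∀ s, ((2 * (m + 1 : ℕ) + 1) / (2 * (m + 1 : ℕ) * ((m + 1 : ℕ) + 1)) : ℝ) ≤ s →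
      stairStep (m + 1) s = 1 := fun s hs ↦ stairStep_eq_one m.succ_pos le_rfl hs
  have hd : deriv (stairStep (m + 1)) t = 0 := by
    apply IsLocalMax.deriv_eq_zero
    filter_upwards with s
    rw [hχ t h3.le]
    exact stairStep_le_one _ _
  have h2m : (2 : ℝ) ^ m * (1 / 2) ^ m = 1 := by rw [← mul_pow]; norm_num
  rw [(hasDerivAt_stairProfile h1 h2).deriv,
    stairProfile_of_mem ((riser_lt m).le.trans h1) (Or.inr h2.le), hd, hχ t h3.le,
    ← mul_assoc, ← mul_assoc, h2m]
  constructor <;> ring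

include h

theorem deriv_interval_pos {m : ℕ} {t : ℝ} (ht : t ∈ Icc (0 : ℝ) 1) :
    0 < p + A m * deriv (wiggle k m) t := by
  have := (abs_le.1 (h.abs_deriv_wiggle_le m t ht)).1
  linarith [h.pos]

/-- Outside of the invariant intervals the profile is expanding. -/
theorem expanding {m : ℕ} {t : ℝ} (h1 : 1 / ((m : ℝ) + 2) ≤ t) (h2 : t < 1 / (m + 1))
    (h3 : t < wiggleZero k m (2 * k m)) :
    0 < deriv (stairProfile k A p) t ∧ ∃ n : ℕ, 2 ^ n * stairProfile k A p t ≤ 3 / 2 ∧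
      p < 2 ^ n * deriv (stairProfile k A p) t := by
  have hp := h.pos
  have hp1 := h.le
  obtain ⟨ht0, ht1⟩ := mem_Ioo_of_stair h1 h2
  have hd0 : 0 < A m * deriv (wiggle k m) t :=
    mul_pos (h.amp_pos m) ((deriv_wiggle k m ht1).1 h3)
  have hd1 : 0 < A (m + 1) * deriv (wiggle k (m + 1)) t := by
    refine mul_pos (h.amp_pos _) ((deriv_wiggle k (m + 1) ht1).2.1 ?_)
    push_cast
    rwa [add_assoc, one_add_one_eq_two]
  have hb0 := abs_le.1 (h.abs_wiggle_le m t ⟨ht0.le, ht1.le⟩)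
  have hb1 := abs_le.1 (h.abs_wiggle_le (m + 1) t ⟨ht0.le, ht1.le⟩)
  have hχ0 := stairStep_nonneg (m + 1) t
  have hχ1 := stairStep_le_one (m + 1) t
  have hχ' := le_deriv_stairStep m t
  rw [(hasDerivAt_stairProfile h1 h2).deriv,
    stairProfile_of_mem ((riser_lt m).le.trans h1) (Or.inr h2.le)]
  have h2m : (2 : ℝ) ^ m * (1 / 2) ^ m = 1 := by rw [← mul_pow]; norm_num
  have h2m' : (2 : ℝ) ^ (m + 1) * (1 / 2) ^ m = 2 := by
    rw [pow_succ, mul_right_comm, h2m, one_mul]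
  have hm : (0 : ℝ) < (1 / 2) ^ m := by positivity
  set χ := stairStep (m + 1) t
  set χ' := deriv (stairStep (m + 1)) t
  set D := A m * wiggle k m t
  set E := A (m + 1) * wiggle k (m + 1) t
  set D' := A m * deriv (wiggle k m) t
  set E' := A (m + 1) * deriv (wiggle k (m + 1)) t
  have hpt : 0 < p * t := mul_pos hp ht0
  have hpt1 : p * t ≤ 1 / 20 := by nlinarith
  have hχ'0 : 0 ≤ χ' := (mul_nonneg hχ0 (sub_nonneg.2 hχ1)).trans hχ'
  have hc : 3 / 8 * χ' ≤ χ' * ((1 + p * t) / 2 + D - E / 2) := by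
    rw [mul_comm]
    exact mul_le_mul_of_nonneg_left (by linarith) hχ'0
  have hE : 0 ≤ (1 - χ) * E' := mul_nonneg (sub_nonneg.2 hχ1) hd1.le
  have hD : 0 ≤ χ * D' := mul_nonneg hχ0 hd0.le
  refine ⟨mul_pos hm (by nlinarith), ?_⟩
  rcases le_or_gt χ (1 / 4) with hle | hgt
  · refine ⟨m + 1, ?_, ?_⟩
    · rw [← mul_assoc, h2m']
      nlinarith
    · rw [← mul_assoc, h2m']
      have h5 : p < 2 * (χ * (p + D') + (1 - χ) * (p + E') / 2) := by
        have : 0 < (1 - χ) * E' := mul_pos (by linarith) hd1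
        nlinarith
      linarith
  · refine ⟨m, ?_, ?_⟩
    · rw [← mul_assoc, h2m]
      nlinarith
    · rw [← mul_assoc, h2m]
      have h5 : 0 < χ * D' := mul_pos (by linarith) hd0
      have h6 : 1 / 4 * (1 - χ) ≤ χ' :=
        (mul_le_mul_of_nonneg_right hgt.le (sub_nonneg.2 hχ1)).trans hχ'
      nlinarith

theorem deriv_pos {t : ℝ} (ht : t ∈ Ioo (0 : ℝ) 1) : 0 < deriv (stairProfile k A p) t := by
  obtain ⟨m, h1, h2⟩ := exists_mem_stair ht
  rcases lt_or_ge t (wiggleZero k m (2 * k m)) with h3 | h3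
  · exact (h.expanding h1 h2 h3).1
  · have h4 := (stairProfile_on_interval (A := A) (p := p) ⟨h3, h2⟩).2
    have h5 := h.deriv_interval_pos (m := m) (Ioo_subset_Icc_self ht)
    rw [← h4] at h5
    exact pos_of_mul_pos_right h5 (by positivity)

theorem deriv_comp_div (x : ℝ) : deriv (fun x ↦ stairProfile k A p (x / p)) x
    = deriv (stairProfile k A p) (x / p) / p := by
  have h1 : HasDerivAt (stairProfile k A p) (deriv (stairProfile k A p) (x / p)) (x / p) :=
    (h.contDiff.differentiable (by simp) _).hasDerivAt
  have h2 := h1.comp x ((hasDerivAt_id x).div_const p)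
  have h3 := h2.deriv
  rw [mul_one_div] at h3
  exact h3

theorem mapsTo_interval {m : ℕ} {t : ℝ}
    (ht : t ∈ Ico (wiggleZero k m (2 * k m)) (1 / ((m : ℝ) + 1))) :
    t + A m * wiggle k m t / p ∈ Ico (wiggleZero k m (2 * k m)) (1 / ((m : ℝ) + 1)) := by
  have hp := h.pos
  have hmono : StrictMonoOn (fun t ↦ t + A m * wiggle k m t / p) (Icc 0 1) := by
    have hc := (contDiff_wiggle k m).continuous
    apply strictMonoOn_of_deriv_pos (convex_Icc 0 1) (by fun_prop)
    intro s hs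
    rw [interior_Icc] at hs
    have hd : HasDerivAt (wiggle k m) (deriv (wiggle k m) s) s :=
      ((contDiff_wiggle k m).differentiable (by simp) s).hasDerivAt
    have h1 := ((hasDerivAt_id s).add ((hd.const_mul (A m)).div_const p)).deriv
    have h2 : deriv (fun t ↦ t + A m * wiggle k m t / p) s = _ := h1
    rw [h2]
    have h3 := h.deriv_interval_pos (m := m) (Ioo_subset_Icc_self hs)
    have h4 : 1 + A m * deriv (wiggle k m) s / p = (p + A m * deriv (wiggle k m) s) / p := by
      field_simp
    rw [h4]
    positivity
  have hb := stair_bounds ht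
  have ht01 := Ioo_subset_Icc_self (mem_Ioo_of_stair hb.1 hb.2.1)
  have hz : ∀ i ≤ 2 * k m, wiggleZero k m i ∈ Icc (0 : ℝ) 1 := fun i hi ↦
    ⟨le_trans (by positivity) (lt_wiggleZero k m hi).le, wiggleZero_le_one k m i⟩
  have hfix : ∀ i ≤ 2 * k m,
      wiggleZero k m i + A m * wiggle k m (wiggleZero k m i) / p = wiggleZero k m i := by
    intro i hi
    rw [wiggle_wiggleZero k m hi]; simp
  constructor
  · have := hmono.monotoneOn (hz _ le_rfl) ht01 ht.1
    simpa only [hfix _ le_rfl] using this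
  · have h0 := wiggleZero_zero k m
    have h1 := hmono ht01 (hz 0 (Nat.zero_le _)) (by rw [h0]; exact ht.2)
    simp only [hfix 0 (Nat.zero_le _)] at h1
    rwa [h0] at h1

theorem branch_eq {m : ℕ} {x : ℝ} (hx : x ∈ wiggleInterval k p m) :
    2 ^ m * stairProfile k A p (x / p) - 1 = x + A m * wiggle k m (x / p) := by
  rw [(stairProfile_on_interval hx).1, mul_div_cancel₀ _ h.pos.ne']
  ring

theorem isProfile :
    IsProfile p (fun x ↦ stairProfile k A p (x / p)) (wiggleInterval k p) where
  pos := h.pos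
  le := h.le
  contDiff := h.contDiff.comp (contDiff_id.div_const p)
  eq_zero x hx := stairProfile_of_nonpos (div_nonpos_of_nonpos_of_nonneg hx h.pos.le)
  eq_affine x hx := by
    have hp := h.pos
    have h1 : 1 ≤ x / p := by rwa [one_le_div hp]
    have h2 := h.amp_zero
    rw [stairProfile_of_one_le h1, wiggle_of_one_le k 0 h1, mul_left_comm, h2,
      mul_div_cancel₀ _ hp.ne', wiggleZero_zero]
    field_simp
    ring
  deriv_pos x hx := by
    have hp := h.pos
    rw [h.deriv_comp_div]
    exact div_pos (h.deriv_pos ⟨div_pos hx.1 hp, (div_lt_one hp).2 hx.2⟩) hp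
  cover x hx := by
    have hp := h.pos
    have ht : x / p ∈ Ioo (0 : ℝ) 1 := ⟨div_pos hx.1 hp, (div_lt_one hp).2 hx.2⟩
    obtain ⟨m, h1, h2⟩ := exists_mem_stair ht
    rcases lt_or_ge (x / p) (wiggleZero k m (2 * k m)) with h3 | h3
    · obtain ⟨n, h4, h5⟩ := (h.expanding h1 h2 h3).2
      refine Or.inl ⟨n, h4, ?_⟩
      rwa [h.deriv_comp_div, ← mul_div_assoc, one_lt_div hp]
    · exact Or.inr ⟨m, h3, h2⟩
  subset m x hx := by
    have hp := h.pos
    have hb := stair_bounds hx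
    obtain ⟨h1, h2⟩ := mem_Ioo_of_stair hb.1 hb.2.1
    exact ⟨(div_pos_iff_of_pos_right hp).1 h1, (div_lt_one hp).1 h2⟩
  bound m x hx := by
    have hp := h.pos
    have hp1 := h.le
    have hb := stair_bounds hx
    have ht := mem_Ioo_of_stair hb.1 hb.2.1
    have h1 := (abs_le.1 (h.abs_wiggle_le m _ (Ioo_subset_Icc_self ht))).2
    rw [(stairProfile_on_interval hx).1]
    nlinarith [ht.1, ht.2]
  mapsTo m x hx := by
    have hp := h.pos
    rw [h.branch_eq hx]
    show (x + A m * wiggle k m (x / p)) / p ∈ Ico (wiggleZero k m (2 * k m)) (1 / ((m : ℝ) + 1))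
    rw [add_div]
    exact h.mapsTo_interval hx
  hyperbolic m x hx hfix := by
    have hp := h.pos
    have hb := stair_bounds hx
    have ht := mem_Ioo_of_stair hb.1 hb.2.1
    rw [h.branch_eq hx] at hfix
    have h0 : wiggle k m (x / p) = 0 := by
      have : A m * wiggle k m (x / p) = 0 := by linarith
      exact (mul_eq_zero.1 this).resolve_left (h.amp_pos m).ne'
    have h1 := (deriv_wiggle k m ht.2).2.2 h0
    rw [h.deriv_comp_div, ← mul_div_assoc, (stairProfile_on_interval hx).2]
    intro h2
    rw [div_eq_one_iff_eq hp.ne'] at h2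
    have : A m * deriv (wiggle k m) (x / p) = 0 := by linarith
    exact h1 ((mul_eq_zero.1 this).resolve_left (h.amp_pos m).ne')

theorem exists_finset_subset_Per (m : ℕ) : ∃ s : Finset ℝ,
    ↑s ⊆ Per (capMap p fun x ↦ stairProfile k A p (x / p)) (m + 2) ∩ Icc (-1) 1 ∧
      k m ≤ s.card := by
  have hp := h.pos
  have hp1 := h.le
  refine ⟨(Finset.range (2 * k m)).image fun i ↦ p * wiggleZero k m (i + 1), ?_, ?_⟩
  · intro x hx
    obtain ⟨i, hi, rfl⟩ := Finset.mem_image.1 (Finset.mem_coe.1 hx)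
    have hi' : i + 1 ≤ 2 * k m := Finset.mem_range.1 hi
    have hdiv : p * wiggleZero k m (i + 1) / p = wiggleZero k m (i + 1) :=
      mul_div_cancel_left₀ _ hp.ne'
    have hmem : p * wiggleZero k m (i + 1) ∈ wiggleInterval k p m := by
      show p * wiggleZero k m (i + 1) / p ∈ Ico (wiggleZero k m (2 * k m)) (1 / ((m : ℝ) + 1))
      rw [hdiv]
      refine ⟨(strictAnti_wiggleZero k m).antitone hi', ?_⟩
      rw [← wiggleZero_zero k m]
      exact strictAnti_wiggleZero k m i.succ_pos
    refine ⟨h.isProfile.mem_Per hmem ?_, ?_⟩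
    · rw [h.branch_eq hmem, hdiv, wiggle_wiggleZero k m hi']
      ring
    · have := h.isProfile.subset m hmem
      exact ⟨by linarith [this.1], by linarith [this.2]⟩
  · rw [Finset.card_image_of_injective, Finset.card_range]
    · omega
    · intro i j hij
      have := (strictAnti_wiggleZero k m).injective (mul_left_cancel₀ hp.ne' hij)
      omega

end IsAdmissible


section Smoothness

theorem Real.smoothTransition.exists_norm_iteratedDeriv_le (j : ℕ) :
    ∃ C, 0 ≤ C ∧ ∀ t, ‖iteratedDeriv j Real.smoothTransition t‖ ≤ C := by
  have hc : Continuous (iteratedDeriv j Real.smoothTransition) :=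
    (Real.smoothTransition.contDiff (n := j)).continuous_iteratedDeriv j le_rfl
  obtain ⟨C, hC⟩ := isCompact_Icc.exists_bound_of_continuousOn (s := Icc (0 : ℝ) 1) hc.continuousOn
  have hconst : ∀ (c t : ℝ), ‖c‖ ≤ 1 → Real.smoothTransition =ᶠ[𝓝 t] (fun _ ↦ c) →
      ‖iteratedDeriv j Real.smoothTransition t‖ ≤ 1 := by
    intro c t hc1 h
    rw [h.iteratedDeriv_eq, iteratedDeriv_const]
    split_ifs
    · exact hc1
    · simp
  refine ⟨max C 1, by positivity, fun t ↦ ?_⟩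
  rcases lt_or_ge t 0 with h0 | h0
  · refine (hconst 0 t (by simp) ?_).trans (le_max_right _ _)
    filter_upwards [Iio_mem_nhds h0] with s hs
    exact Real.smoothTransition.zero_of_nonpos (le_of_lt hs)
  rcases lt_or_ge 1 t with h1 | h1
  · refine (hconst 1 t (by simp) ?_).trans (le_max_right _ _)
    filter_upwards [Ioi_mem_nhds h1] with s hs
    exact Real.smoothTransition.one_of_one_le (le_of_lt hs)
  · exact (hC t ⟨h0, h1⟩).trans (le_max_left _ _)

theorem iteratedDeriv_stairStep (j m : ℕ) (t : ℝ) : iteratedDeriv j (stairStep m) t =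
    (2 * m * (m + 1)) ^ j *
      iteratedDeriv j Real.smoothTransition (2 * m * (m + 1) * t - 2 * m) := by
  have h1 : stairStep m = fun t ↦ (fun s ↦ Real.smoothTransition (s - 2 * m))
      ((2 * m * (m + 1) : ℝ) * t) := rfl
  have h2 : ContDiff ℝ j fun s ↦ Real.smoothTransition (s - 2 * m) :=
    Real.smoothTransition.contDiff.comp (contDiff_id.sub contDiff_const)
  rw [h1, iteratedDeriv_comp_const_mul h2, iteratedDeriv_comp_sub_const]

theorem exists_norm_iteratedFDeriv_stairWeight_le (j : ℕ) :
    ∃ C, ∀ m t, ‖iteratedFDeriv ℝ j (fun t ↦ (1 / 2) ^ m * stairWeight m t) t‖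
      ≤ C * ((m + 2 : ℕ) ^ (2 * j) * (1 / 2) ^ (m + 2)) := by
  obtain ⟨C, hC0, hC⟩ := Real.smoothTransition.exists_norm_iteratedDeriv_le j
  refine ⟨8 * 2 ^ j * C, fun m t ↦ ?_⟩
  have hs : ∀ n ≤ m + 1, ‖iteratedDeriv j (stairStep n) t‖ ≤ 2 ^ j * (m + 2 : ℕ) ^ (2 * j) * C := by
    intro n hn
    rw [iteratedDeriv_stairStep, norm_mul, norm_pow]
    refine mul_le_mul ?_ (hC _) (norm_nonneg _) (by positivity)
    rw [pow_mul, ← mul_pow]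
    refine pow_le_pow_left₀ (norm_nonneg _) ?_ _
    have h1 : (n : ℝ) ≤ m + 1 := by exact_mod_cast hn
    have h2 : (0 : ℝ) ≤ n := n.cast_nonneg
    rw [Real.norm_of_nonneg (by positivity)]
    push_cast
    nlinarith
  have hd : iteratedDeriv j (stairWeight m) t
      = iteratedDeriv j (stairStep (m + 1)) t - iteratedDeriv j (stairStep m) t :=
    iteratedDeriv_fun_sub ((contDiff_stairStep (m + 1)).of_le (by exact_mod_cast le_top)).contDiffAt
      ((contDiff_stairStep m).of_le (by exact_mod_cast le_top)).contDiffAt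
  rw [norm_iteratedFDeriv_eq_norm_iteratedDeriv, iteratedDeriv_const_mul_field, norm_mul, hd]
  have h1 := (norm_sub_le _ _).trans (add_le_add (hs (m + 1) le_rfl) (hs m m.le_succ))
  have h2 : ‖(1 / 2 : ℝ) ^ m‖ = (1 / 2) ^ m := Real.norm_of_nonneg (by positivity)
  rw [h2]
  refine (mul_le_mul_of_nonneg_left h1 (by positivity)).trans_eq ?_
  rw [pow_add (1 / 2 : ℝ) m 2]
  ring

theorem contDiff_staircase : ContDiff ℝ (⊤ : ℕ∞) staircase := by
  choose C hC using exists_norm_iteratedFDeriv_stairWeight_le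
  refine contDiff_tsum (v := fun j m ↦ C j * ((m + 2 : ℕ) ^ (2 * j) * (1 / 2) ^ (m + 2)))
    (fun m ↦ contDiff_const.mul (contDiff_stairWeight m)) (fun j _ ↦ ?_) (fun j m t _ ↦ hC j m t)
  exact (((summable_nat_add_iff 2).2
    (summable_pow_mul_geometric_of_norm_lt_one (2 * j) (r := (1 / 2 : ℝ)) (by norm_num)))).mul_left _

theorem contDiff_localizedWiggle (k : ℕ → ℕ) (m : ℕ) :
    ContDiff ℝ (⊤ : ℕ∞) fun t ↦ (1 / 2) ^ m * (stairWeight m t * wiggle k m t) :=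
  contDiff_const.mul ((contDiff_stairWeight m).mul (contDiff_wiggle k m))

theorem exists_norm_iteratedFDeriv_localizedWiggle_le (k : ℕ → ℕ) {m : ℕ} (hm : 0 < m) (j : ℕ) :
    ∃ C, ∀ t, ‖iteratedFDeriv ℝ j
      (fun t ↦ (1 / 2) ^ m * (stairWeight m t * wiggle k m t)) t‖ ≤ C := by
  have hsupp : HasCompactSupport fun t ↦ (1 / 2) ^ m * (stairWeight m t * wiggle k m t) := by
    refine HasCompactSupport.intro (isCompact_Icc (a := (0 : ℝ)) (b := 1)) fun t ht ↦ ?_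
    have : stairWeight m t = 0 := by
      rcases lt_or_ge t 0 with h0 | h0
      · exact stairWeight_of_nonpos m h0.le
      · exact stairWeight_of_one_le hm (le_of_not_ge fun h1 ↦ ht ⟨h0, h1⟩)
    simp [this]
  exact ((contDiff_localizedWiggle k m).continuous_iteratedFDeriv
    (by exact_mod_cast le_top)).bounded_above_of_compact_support (hsupp.iteratedFDeriv j)

theorem contDiff_wiggleSum (k : ℕ → ℕ) (A : ℕ → ℝ)
    (hA : ∀ m, 0 < m → ∀ j ≤ m, ∀ t, ‖iteratedFDeriv ℝ j
      (fun t ↦ A m * ((1 / 2) ^ m * (stairWeight m t * wiggle k m t))) t‖ ≤ (1 / 2) ^ m) :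
    ContDiff ℝ (⊤ : ℕ∞) (wiggleSum k A) := by
  refine contDiff_tsum_of_eventually (v := fun _ m ↦ (1 / 2) ^ m)
    (fun m ↦ contDiff_const.mul (contDiff_localizedWiggle k m))
    (fun j _ ↦ summable_geometric_two) (fun j _ ↦ ?_)
  rw [Nat.cofinite_eq_atTop]
  filter_upwards [eventually_ge_atTop (j + 1)] with m hm t
  exact hA m (by omega) j (by omega) t

end Smoothness

theorem exists_bound_wiggle (k : ℕ → ℕ) (m : ℕ) : ∃ C, 0 < C ∧ ∀ t ∈ Icc (0 : ℝ) 1,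
    |wiggle k m t| ≤ C ∧ |deriv (wiggle k m) t| ≤ C := by
  have h1 := (contDiff_wiggle k m).continuous
  have h2 := (contDiff_wiggle k m).continuous_deriv (by simp)
  obtain ⟨C₁, hC₁⟩ := isCompact_Icc.exists_bound_of_continuousOn (s := Icc (0 : ℝ) 1)
    h1.continuousOn
  obtain ⟨C₂, hC₂⟩ := isCompact_Icc.exists_bound_of_continuousOn (s := Icc (0 : ℝ) 1)
    h2.continuousOn
  exact ⟨max 1 (max C₁ C₂), by positivity, fun t ht ↦
    ⟨(hC₁ t ht).trans (by simp), (hC₂ t ht).trans (by simp)⟩⟩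

/-- Sufficiently small amplitudes keep the localized wiggle small with many derivatives. -/
theorem exists_amplitude (k : ℕ → ℕ) {m : ℕ} (hm : 0 < m) {ε : ℝ} (hε : 0 < ε) :
    ∃ a, 0 < a ∧ (∀ t ∈ Icc (0 : ℝ) 1, |a * wiggle k m t| ≤ ε ∧ |a * deriv (wiggle k m) t| ≤ ε) ∧
      ∀ j ≤ m, ∀ t, ‖iteratedFDeriv ℝ j
        (fun t ↦ a * ((1 / 2) ^ m * (stairWeight m t * wiggle k m t))) t‖ ≤ (1 / 2) ^ m := by
  obtain ⟨C, hC, hw⟩ := exists_bound_wiggle k m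
  choose D hD using exists_norm_iteratedFDeriv_localizedWiggle_le k hm
  have hD0 : ∀ j, 0 ≤ D j := fun j ↦ (norm_nonneg _).trans (hD j 0)
  set S := ∑ j ∈ Finset.range (m + 1), D j
  have hS : 0 ≤ S := Finset.sum_nonneg fun j _ ↦ hD0 j
  have hle : ∀ {a b c : ℝ}, 0 < b → 0 ≤ c → a ≤ b / (c + 1) → 0 < a → a * c ≤ b := by
    intro a b c hb hc h ha
    rw [le_div_iff₀ (by positivity)] at h
    linarith
  have hh : (0 : ℝ) < (1 / 2) ^ m := by positivity
  have ha : 0 < min (ε / (C + 1)) ((1 / 2) ^ m / (S + 1)) := by positivity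
  refine ⟨min (ε / (C + 1)) ((1 / 2) ^ m / (S + 1)), ha, fun t ht ↦ ?_, fun j hj t ↦ ?_⟩
  · have h1 := hle hε hC.le (min_le_left _ _) ha
    rw [abs_mul, abs_mul, abs_of_pos ha]
    exact ⟨(mul_le_mul_of_nonneg_left (hw t ht).1 ha.le).trans h1,
      (mul_le_mul_of_nonneg_left (hw t ht).2 ha.le).trans h1⟩
  · have h1 := hle hh hS (min_le_right _ _) ha
    have h2 : D j ≤ S := Finset.single_le_sum (f := D) (fun i _ ↦ hD0 i)
      (Finset.mem_range.2 (by omega))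
    rw [norm_iteratedFDeriv_eq_norm_iteratedDeriv, iteratedDeriv_const_mul_field, norm_mul,
      ← norm_iteratedFDeriv_eq_norm_iteratedDeriv, Real.norm_of_nonneg ha.le]
    exact (mul_le_mul_of_nonneg_left ((hD j t).trans h2) ha.le).trans h1

theorem exists_isAdmissible (k : ℕ → ℕ) : ∃ A p, IsAdmissible k A p := by
  obtain ⟨C, hC, hw⟩ := exists_bound_wiggle k 0
  set c := ∏ i ∈ Finset.range (2 * k 0), expNegInvGlue (1 - wiggleZero k 0 (i + 1)) with hc
  have hc0 : 0 < c := prod_expNegInvGlue_pos k 0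
  set p := min (1 / 20) (c / (10 * C)) with hp
  have hp0 : 0 < p := by positivity
  have hp1 : p ≤ 1 / 20 := min_le_left _ _
  have hp2 : p * (10 * C) ≤ c := by
    rw [← le_div_iff₀ (by positivity)]
    exact min_le_right _ _
  have hε : 0 < min (1 / 16) (p / 2) := by positivity
  have hε0 : p / 2 ≤ 1 / 16 := by linarith
  set a := 4 * p / (1 - p) ^ 2 * p / c with ha
  have h1p : 0 < 1 - p := by linarith
  have ha0 : 0 < a := by positivity
  have haC : a * C ≤ p / 2 := by
    have h1 : 4 / (1 - p) ^ 2 ≤ 5 := by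
      rw [div_le_iff₀ (by positivity)]
      nlinarith
    have h2 : a * C = 4 / (1 - p) ^ 2 * (p * (p * C / c)) := by
      rw [ha]; field_simp
    have h3 : p * C / c ≤ 1 / 10 := by
      rw [div_le_iff₀ hc0]; linarith
    have h4 : p * (p * C / c) ≤ p * (1 / 10) := mul_le_mul_of_nonneg_left h3 hp0.le
    rw [h2]
    calc _ ≤ 5 * (p * (1 / 10)) := mul_le_mul h1 h4 (by positivity) (by norm_num)
      _ = p / 2 := by ring
  choose B hB using fun m ↦ exists_amplitude k (Nat.succ_pos m) (half_pos hp0)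
  let A : ℕ → ℝ := fun m ↦ Nat.casesOn m a B
  have hbound : ∀ m, ∀ t ∈ Icc (0 : ℝ) 1,
      |A m * wiggle k m t| ≤ p / 2 ∧ |A m * deriv (wiggle k m) t| ≤ p / 2 := by
    rintro (_ | m) t ht
    · show |a * wiggle k 0 t| ≤ p / 2 ∧ |a * deriv (wiggle k 0) t| ≤ p / 2
      rw [abs_mul, abs_mul, abs_of_pos ha0]
      exact ⟨(mul_le_mul_of_nonneg_left (hw t ht).1 ha0.le).trans haC,
        (mul_le_mul_of_nonneg_left (hw t ht).2 ha0.le).trans haC⟩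
    · exact (hB m).2.1 t ht
  refine ⟨A, p, hp0, hp1, ?_, div_mul_cancel₀ _ hc0.ne', fun m t ht ↦ (hbound m t ht).1.trans hε0,
    fun m t ht ↦ (hbound m t ht).2, ?_⟩
  · rintro (_ | m)
    · exact ha0
    · exact (hB m).1
  · have hsum : ContDiff ℝ (⊤ : ℕ∞) (wiggleSum k A) := by
      refine contDiff_wiggleSum k A ?_
      rintro (_ | m) hm
      · exact absurd hm (lt_irrefl 0)
      · exact (hB m).2.2
    exact ((contDiff_const.add (contDiff_const.mul contDiff_id)).mul contDiff_staircase).add hsum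

/-- for any sequence `(γ_n)` of positive integers there is a C^∞ unimodal
self-map of `[-1,1]` (unique critical point) all of whose periodic points are hyperbolic
and with at least `γ_n` periodic points of least period `n` for every `n ≥ 2`. -/
theorem stmt8 (γ : ℕ → ℕ) (hγ : ∀ n, 0 < γ n) :
    ∃ f : ℝ → ℝ, ContDiff ℝ (⊤ : ℕ∞) f ∧
      Set.MapsTo f (Set.Icc (-1:ℝ) 1) (Set.Icc (-1:ℝ) 1) ∧
      (∃! c : ℝ, c ∈ Set.Icc (-1:ℝ) 1 ∧ deriv f c = 0) ∧
      (∀ x ∈ Set.Icc (-1:ℝ) 1, ∀ n : ℕ, 1 ≤ n → x ∈ Per f n →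
        |deriv (f^[n]) x| ≠ 1) ∧
      (∀ n : ℕ, 2 ≤ n → ∃ s : Finset ℝ,
        ↑s ⊆ Per f n ∩ Set.Icc (-1:ℝ) 1 ∧ γ n ≤ s.card) := by
  obtain ⟨A, p, h⟩ := exists_isAdmissible fun m ↦ γ (m + 2)
  refine ⟨_, h.isProfile.contDiff_capMap, h.isProfile.mapsTo_capMap,
    ⟨0, ⟨by norm_num, h.isProfile.deriv_capMap_zero⟩,
      fun y hy ↦ h.isProfile.eq_zero_of_deriv_capMap hy.2⟩,
    fun x _ n hn hx ↦ h.isProfile.abs_multiplier_ne_one hn hx.1, fun n hn ↦ ?_⟩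
  obtain ⟨m, rfl⟩ := Nat.exists_eq_add_of_le' hn
  exact h.exists_finset_subset_Per m
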